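/- arXiv:1311.3690 — 2 statements merged into one kernel-verified Lean document; each statement's English description precedes it below -/
import Mathlib

section
/- Let φ : ℝ^{n+1} → (0, ∞] be a positive convex function and α > 0. Then the function Φ(t) = (∫_{ℝⁿ} φ(t, x)^{-n-α} dx)^{-1/α} is convex on ℝ. -/
open MeasureTheory

/-!
Rescaling the fibres absorbs the convex weights, so the theorem says that
`φ ↦ (∫⁻ φ ^ (-(n + α))) ^ (-α⁻¹)` is subadditive along inequalities `φ (x + y) ≤ φ₀ x + φ₁ y`
between functions on `ℝⁿ`. On the line, write `a`, `b` for the infima of `φ₀`, `φ₁` and `I₀`, `I₁`,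
`I` for the three integrals. Since `{φ < (a + b) s}` contains `{φ₀ < a s} + {φ₁ < b s}`, the
one-dimensional Brunn–Minkowski inequality and the layer cake formula give
`a ^ (1 + α) I₀ + b ^ (1 + α) I₁ ≤ (a + b) ^ (1 + α) I`, and Radon's inequality eliminates `a` and
`b`. By Tonelli's theorem the functional with parameters `d + e, α` on a product is the one with
parameters `d, α` applied to the fibrewise one with parameters `e, d + α`, so subadditivity passes
from the factors to the product, hence from `ℝ` to `ℝⁿ`.
-/

open Module Set Filter
open scoped ENNReal NNReal Pointwise Topology

section BrunnMinkowski

variable {A B : Set ℝ}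

lemma volume_add_volume_le_volume_add_of_isCompact (hA : IsCompact A) (hB : IsCompact B)
    (hA₀ : A.Nonempty) (hB₀ : B.Nonempty) : volume A + volume B ≤ volume (A + B) := by
  obtain ⟨x, hxA, hx⟩ := hA.exists_isGreatest hA₀
  obtain ⟨y, hyB, hy⟩ := hB.exists_isLeast hB₀
  have volume_A : volume (A + {y}) = volume A := by
    rw [add_singleton, image_add_right, measure_preimage_add_right]
  have volume_B : volume ({x} + B) = volume B := by
    rw [singleton_add, image_add_left, measure_preimage_add]
  have hdisj : AEDisjoint volume (A + {y}) ({x} + B) := by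
    refine measure_mono_null (t := {x + y}) ?_ (by simp)
    rintro _ ⟨⟨a, ha, _, rfl, rfl⟩, ⟨_, rfl, b, hb, h⟩⟩
    have := hx ha
    have := hy hb
    simp only [mem_singleton_iff] at *
    linarith
  have hmeas : NullMeasurableSet ({x} + B) volume :=
    (isCompact_singleton.add hB).measurableSet.nullMeasurableSet
  rw [← volume_A, ← volume_B, ← measure_union₀ hmeas hdisj]
  exact measure_mono (union_subset (add_subset_add_left (singleton_subset_iff.2 hyB))
    (add_subset_add_right (singleton_subset_iff.2 hxA)))

lemma volume_add_volume_le_volume_add (hA : MeasurableSet A) (hB : MeasurableSet B)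
    (hA₀ : A.Nonempty) (hB₀ : B.Nonempty) : volume A + volume B ≤ volume (A + B) := by
  obtain ⟨x, hx⟩ := hA₀
  obtain ⟨y, hy⟩ := hB₀
  rw [hA.measure_eq_iSup_isCompact, hB.measure_eq_iSup_isCompact]
  simp_rw [iSup_and']
  refine ENNReal.biSup_add_biSup_le' ⟨∅, empty_subset _, isCompact_empty⟩
    ⟨∅, empty_subset _, isCompact_empty⟩ fun K ⟨hKA, hK⟩ L ⟨hLB, hL⟩ => ?_
  calc volume K + volume L
      ≤ volume (insert x K) + volume (insert y L) := by gcongr <;> exact subset_insert _ _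
    _ ≤ volume (insert x K + insert y L) :=
        volume_add_volume_le_volume_add_of_isCompact (hK.insert x) (hL.insert y)
          (insert_nonempty x K) (insert_nonempty y L)
    _ ≤ volume (A + B) :=
        measure_mono (add_subset_add (insert_subset hx hKA) (insert_subset hy hLB))

end BrunnMinkowski

section LayerCake

lemma volume_setOf_ofReal_lt (y : ℝ≥0∞) :
    volume.restrict (Ioi 0) {t : ℝ | ENNReal.ofReal t < y} = y := by
  have hmeas : MeasurableSet {t : ℝ | ENNReal.ofReal t < y} :=
    measurableSet_lt ENNReal.measurable_ofReal measurable_const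
  rw [Measure.restrict_apply hmeas]
  induction y with
  | top => simp
  | coe y =>
    have : {t : ℝ | ENNReal.ofReal t < y} ∩ Ioi 0 = Ioo 0 (y : ℝ) := by
      ext t
      simp only [mem_inter_iff, mem_ofPred_eq, mem_Ioi, mem_Ioo]
      rw [and_comm, and_congr_right_iff]
      intro ht
      rw [← ENNReal.ofReal_coe_nnreal, ENNReal.ofReal_lt_ofReal_iff_of_nonneg ht.le]
    simp [this]

variable {X : Type*} [MeasurableSpace X] {μ : Measure X} [SFinite μ]

lemma lintegral_eq_lintegral_measure_ofReal_lt {f : X → ℝ≥0∞} (hf : Measurable f) :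
    ∫⁻ x, f x ∂μ = ∫⁻ t in Ioi (0 : ℝ), μ {x | ENNReal.ofReal t < f x} := by
  let S : Set (X × ℝ) := {z | ENNReal.ofReal z.2 < f z.1}
  have hS : MeasurableSet S :=
    measurableSet_lt (ENNReal.measurable_ofReal.comp measurable_snd) (hf.comp measurable_fst)
  calc ∫⁻ x, f x ∂μ
      = ∫⁻ x, volume.restrict (Ioi 0) (Prod.mk x ⁻¹' S) ∂μ :=
        lintegral_congr fun x => (volume_setOf_ofReal_lt (f x)).symm
    _ = μ.prod (volume.restrict (Ioi 0)) S := (Measure.prod_apply hS).symm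
    _ = ∫⁻ t in Ioi (0 : ℝ), μ {x | ENNReal.ofReal t < f x} := Measure.prod_apply_symm hS

lemma lt_mul_rpow_neg_iff {c t y : ℝ≥0∞} {p : ℝ} (hc₀ : c ≠ 0) (hc : c ≠ ∞) (hp : 0 < p) :
    t < c ^ p * y ^ (-p) ↔ y < c * t⁻¹ ^ p⁻¹ := by
  have : c ^ p * y ^ (-p) = ((y / c) ^ p)⁻¹ := by
    rw [← ENNReal.inv_rpow, ENNReal.inv_div (.inl hc) (.inl hc₀), div_eq_mul_inv,
      ENNReal.mul_rpow_of_nonneg _ _ hp.le, ENNReal.inv_rpow, ENNReal.rpow_neg]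
  rw [this, ENNReal.lt_inv_iff_lt_inv, ← ENNReal.lt_rpow_inv_iff hp,
    ENNReal.div_lt_iff (.inl hc₀) (.inl hc), mul_comm]

lemma rpow_mul_lintegral_rpow_neg {φ : X → ℝ≥0∞} (hφ : Measurable φ) {c : ℝ≥0∞} (hc₀ : c ≠ 0)
    (hc : c ≠ ∞) {p : ℝ} (hp : 0 < p) :
    c ^ p * ∫⁻ x, φ x ^ (-p) ∂μ =
      ∫⁻ t in Ioi (0 : ℝ), μ {x | φ x < c * (ENNReal.ofReal t)⁻¹ ^ p⁻¹} := by
  rw [← lintegral_const_mul _ (hφ.pow_const _),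
    lintegral_eq_lintegral_measure_ofReal_lt ((hφ.pow_const _).const_mul _)]
  simp only [lt_mul_rpow_neg_iff hc₀ hc hp]

end LayerCake

section Radon

variable {α : ℝ}

lemma weighted_add_rpow_le (hα : 0 ≤ α) (w₀ w₁ z₀ z₁ : ℝ≥0∞) :
    (w₀ * z₀ + w₁ * z₁) ^ (1 + α) ≤
      (w₀ + w₁) ^ α * (w₀ * z₀ ^ (1 + α) + w₁ * z₁ ^ (1 + α)) := by
  have hp : 0 < 1 + α := by linarith
  have h := ENNReal.inner_le_weight_mul_Lp_of_nonneg Finset.univ (show 1 ≤ 1 + α by linarith)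
    ![w₀, w₁] ![z₀, z₁]
  simp only [Fin.sum_univ_two, Matrix.cons_val_zero, Matrix.cons_val_one] at h
  calc (w₀ * z₀ + w₁ * z₁) ^ (1 + α)
      ≤ ((w₀ + w₁) ^ (1 - (1 + α)⁻¹) *
          (w₀ * z₀ ^ (1 + α) + w₁ * z₁ ^ (1 + α)) ^ (1 + α)⁻¹) ^ (1 + α) := by gcongr
    _ = (w₀ + w₁) ^ α * (w₀ * z₀ ^ (1 + α) + w₁ * z₁ ^ (1 + α)) := by
        rw [ENNReal.mul_rpow_of_nonneg _ _ hp.le, ENNReal.rpow_inv_rpow hp.ne',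
          ← ENNReal.rpow_mul, show (1 - (1 + α)⁻¹) * (1 + α) = α by field_simp; ring]

lemma radon_add_rpow_le (hα : 0 ≤ α) {w₀ w₁ : ℝ≥0∞} (hw₀ : w₀ ≠ 0) (hw₀' : w₀ ≠ ∞)
    (hw₁ : w₁ ≠ 0) (hw₁' : w₁ ≠ ∞) (a b : ℝ≥0∞) :
    (a + b) ^ (1 + α) ≤
      (w₀ + w₁) ^ α * (a ^ (1 + α) * w₀ ^ (-α) + b ^ (1 + α) * w₁ ^ (-α)) := by
  have hterm : ∀ {w : ℝ≥0∞} (c : ℝ≥0∞), w ≠ 0 → w ≠ ∞ →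
      w * (c / w) ^ (1 + α) = c ^ (1 + α) * w ^ (-α) := by
    intro w c hw hw'
    have hsplit : w ^ (-α) = w * w ^ (-(1 + α)) := by
      rw [show -α = 1 + -(1 + α) by ring, ENNReal.rpow_add _ _ hw hw', ENNReal.rpow_one]
    rw [ENNReal.div_rpow_of_nonneg _ _ (by linarith), hsplit, ENNReal.rpow_neg w (1 + α),
      div_eq_mul_inv, mul_left_comm]
  have h := weighted_add_rpow_le hα w₀ w₁ (a / w₀) (b / w₁)
  rwa [ENNReal.mul_div_cancel hw₀ hw₀', ENNReal.mul_div_cancel hw₁ hw₁', hterm a hw₀ hw₀',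
    hterm b hw₁ hw₁'] at h

lemma rpow_neg_inv_rpow_neg (hα : α ≠ 0) (x : ℝ≥0∞) : (x ^ (-α⁻¹)) ^ (-α) = x := by
  rw [← ENNReal.rpow_mul, neg_mul_neg, inv_mul_cancel₀ hα, ENNReal.rpow_one]

lemma rpow_neg_inv_le_iff (hα : 0 < α) {x y : ℝ≥0∞} : x ^ (-α⁻¹) ≤ y ↔ y ^ (-α) ≤ x := by
  rw [ENNReal.rpow_neg, ENNReal.inv_le_iff_inv_le, ENNReal.le_rpow_inv_iff hα, ENNReal.inv_rpow,
    ENNReal.rpow_neg]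

lemma rpow_neg_inv_le_add_of_mul_add_le (hα : 0 < α) {a b I₀ I₁ I : ℝ≥0∞} (ha₀ : a ≠ 0)
    (ha : a ≠ ∞) (hb₀ : b ≠ 0) (hb : b ≠ ∞)
    (h : a ^ (1 + α) * I₀ + b ^ (1 + α) * I₁ ≤ (a + b) ^ (1 + α) * I) :
    I ^ (-α⁻¹) ≤ I₀ ^ (-α⁻¹) + I₁ ^ (-α⁻¹) := by
  have hneg : -α⁻¹ < 0 := by simpa
  have hp : 0 < 1 + α := by linarith
  have hpow₀ : ∀ {c : ℝ≥0∞}, c ≠ 0 → c ^ (1 + α) ≠ 0 := fun hc => by simp [hc, hp.not_gt]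
  have hc₀ : (a + b) ^ (1 + α) ≠ 0 := hpow₀ (by simp [ha₀])
  have hc : (a + b) ^ (1 + α) ≠ ∞ := by finiteness
  rcases eq_or_ne I₀ 0 with rfl | hI₀
  · simp [ENNReal.zero_rpow_of_neg hneg]
  rcases eq_or_ne I₁ 0 with rfl | hI₁
  · simp [ENNReal.zero_rpow_of_neg hneg]
  rcases eq_or_ne I ∞ with rfl | hI
  · simp [ENNReal.top_rpow_of_neg hneg]
  have hsum := ENNReal.add_ne_top.1 (ne_top_of_le_ne_top (ENNReal.mul_ne_top hc hI) h)
  have hI₀' : I₀ ≠ ∞ := (ENNReal.lt_top_of_mul_ne_top_right hsum.1 (hpow₀ ha₀)).ne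
  have hI₁' : I₁ ≠ ∞ := (ENNReal.lt_top_of_mul_ne_top_right hsum.2 (hpow₀ hb₀)).ne
  have hradon := radon_add_rpow_le hα.le (w₀ := I₀ ^ (-α⁻¹)) (w₁ := I₁ ^ (-α⁻¹))
    (by simp [*]) (by simp [*]) (by simp [*]) (by simp [*]) a b
  simp only [rpow_neg_inv_rpow_neg hα.ne'] at hradon
  rw [rpow_neg_inv_le_iff hα, ENNReal.rpow_neg,
    ENNReal.inv_le_iff_le_mul (by simp [*]) (by simp [*])]
  refine (ENNReal.mul_le_mul_iff_right hc₀ hc).1 ?_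
  calc (a + b) ^ (1 + α) * 1
      ≤ (I₀ ^ (-α⁻¹) + I₁ ^ (-α⁻¹)) ^ α * (a ^ (1 + α) * I₀ + b ^ (1 + α) * I₁) := by
        rwa [mul_one]
    _ ≤ (I₀ ^ (-α⁻¹) + I₁ ^ (-α⁻¹)) ^ α * ((a + b) ^ (1 + α) * I) := by gcongr
    _ = (a + b) ^ (1 + α) * ((I₀ ^ (-α⁻¹) + I₁ ^ (-α⁻¹)) ^ α * I) := mul_left_comm _ _ _

end Radon

section Functional

variable {F : Type*} [MeasurableSpace F] {μ : Measure F} {d α : ℝ} {φ : F → ℝ≥0∞}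

/-- The functional `(∫ φ ^ (-(d + α))) ^ (-1 / α)` of Prékopa's dimensional theorem. Here `d` plays
the role of the dimension; in `ℝ≥0∞` the formula also makes sense where `φ` or the integral is
`0` or `∞`. -/
noncomputable def prekopaFunctional (μ : Measure F) (d α : ℝ) (φ : F → ℝ≥0∞) : ℝ≥0∞ :=
  (∫⁻ x, φ x ^ (-(d + α)) ∂μ) ^ (-α⁻¹)

/-- The Borell–Brascamp–Lieb inequality of dimension `d` for `μ`, for all exponents `α` at once: the
functional form of the Brunn–Minkowski inequality. It is encoded without interpolation weights; for
a measure that is homogeneous of degree `d` these come back by replacing `φ` by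
`x ↦ u • φ (u⁻¹ • x)`. -/
def BorellBrascampLieb [Add F] (μ : Measure F) (d : ℝ) : Prop :=
  ∀ ⦃α : ℝ⦄, 0 < α → ∀ ⦃φ₀ φ₁ φ : F → ℝ≥0∞⦄, Measurable φ₀ → Measurable φ₁ → Measurable φ →
    (∀ x y, φ (x + y) ≤ φ₀ x + φ₁ y) →
      prekopaFunctional μ d α φ ≤ prekopaFunctional μ d α φ₀ + prekopaFunctional μ d α φ₁

lemma tendsto_prekopaFunctional_add_inv (hd : 0 ≤ d + α) (hφ : Measurable φ) :
    Tendsto (fun n : ℕ => prekopaFunctional μ d α fun x => φ x + (n : ℝ≥0∞)⁻¹) atTop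
      (𝓝 (prekopaFunctional μ d α φ)) := by
  refine ((ENNReal.continuous_rpow_const.tendsto _).comp
    (lintegral_tendsto_of_tendsto_of_monotone (fun n => by fun_prop) (ae_of_all _ fun x => ?_)
      (ae_of_all _ fun x => ?_)))
  · intro m n hmn
    simp only [ENNReal.rpow_neg]
    gcongr
  · have := tendsto_const_nhds (x := φ x).add ENNReal.tendsto_inv_nat_nhds_zero
    rw [add_zero] at this
    exact (ENNReal.continuous_rpow_const.tendsto _).comp this

lemma prekopaFunctional_top (hd : 0 < d + α) (hα : 0 < α) :
    prekopaFunctional μ d α (fun _ => ∞) = ∞ := by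
  rw [prekopaFunctional, ENNReal.top_rpow_of_neg (by linarith), lintegral_zero,
    ENNReal.zero_rpow_of_neg (by simpa)]

end Functional

section RealLine

variable {α : ℝ} {φ₀ φ₁ φ : ℝ → ℝ≥0∞}

-- Relative to their infima, `φ₀` and `φ₁` have nonempty sublevel sets at the same levels `s`, which
-- Brunn–Minkowski requires.
lemma volume_sublevel_add_volume_sublevel_le (hφ₀ : Measurable φ₀) (hφ₁ : Measurable φ₁)
    (h : ∀ x y, φ (x + y) ≤ φ₀ x + φ₁ y) {a b : ℝ≥0∞} (ha : ⨅ x, φ₀ x = a) (hb : ⨅ x, φ₁ x = b)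
    (ha₀ : a ≠ 0) (ha' : a ≠ ∞) (hb₀ : b ≠ 0) (hb' : b ≠ ∞) (s : ℝ≥0∞) :
    volume {x | φ₀ x < a * s} + volume {x | φ₁ x < b * s} ≤ volume {x | φ x < (a + b) * s} := by
  rcases le_or_gt s 1 with hs | hs
  · have hempty : ∀ {c : ℝ≥0∞} {ψ : ℝ → ℝ≥0∞}, ⨅ x, ψ x = c → {x | ψ x < c * s} = ∅ := by
      rintro _ ψ rfl
      simp only [eq_empty_iff_forall_notMem, mem_ofPred_eq, not_lt]
      exact fun x => (mul_le_of_le_one_right' hs).trans (iInf_le ψ x)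
    simp [hempty ha, hempty hb]
  · have hnonempty : ∀ {c : ℝ≥0∞} {ψ : ℝ → ℝ≥0∞}, ⨅ x, ψ x = c → c ≠ 0 → c ≠ ∞ →
        {x | ψ x < c * s}.Nonempty := by
      rintro _ ψ rfl hc₀ hc
      change ∃ x, ψ x < _
      rw [← iInf_lt_iff]
      simpa using ENNReal.mul_lt_mul_right hc₀ hc hs
    refine (volume_add_volume_le_volume_add (measurableSet_lt hφ₀ measurable_const)
      (measurableSet_lt hφ₁ measurable_const) (hnonempty ha ha₀ ha')
      (hnonempty hb hb₀ hb')).trans (measure_mono ?_)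
    rintro _ ⟨x, hx, y, hy, rfl⟩
    calc φ (x + y) ≤ φ₀ x + φ₁ y := h x y
      _ < a * s + b * s := ENNReal.add_lt_add hx hy
      _ = (a + b) * s := (add_mul a b s).symm

lemma prekopaFunctional_le_add_of_iInf_ne_zero (hα : 0 < α) (hφ₀ : Measurable φ₀)
    (hφ₁ : Measurable φ₁) (hφ : Measurable φ) (h : ∀ x y, φ (x + y) ≤ φ₀ x + φ₁ y)
    (ha₀ : ⨅ x, φ₀ x ≠ 0) (hb₀ : ⨅ x, φ₁ x ≠ 0) :
    prekopaFunctional volume 1 α φ ≤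
      prekopaFunctional volume 1 α φ₀ + prekopaFunctional volume 1 α φ₁ := by
  have hp : 0 < 1 + α := by linarith
  rcases eq_or_ne (⨅ x, φ₀ x) ∞ with ha | ha
  · obtain rfl : φ₀ = fun _ => ∞ := funext (iInf_eq_top.1 ha)
    simp [prekopaFunctional_top hp hα]
  rcases eq_or_ne (⨅ x, φ₁ x) ∞ with hb | hb
  · obtain rfl : φ₁ = fun _ => ∞ := funext (iInf_eq_top.1 hb)
    simp [prekopaFunctional_top hp hα]
  refine rpow_neg_inv_le_add_of_mul_add_le hα ha₀ ha hb₀ hb ?_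
  rw [rpow_mul_lintegral_rpow_neg hφ₀ ha₀ ha hp, rpow_mul_lintegral_rpow_neg hφ₁ hb₀ hb hp,
    rpow_mul_lintegral_rpow_neg hφ (by simp [ha₀]) (by finiteness) hp]
  refine (le_lintegral_add _ _).trans (lintegral_mono fun t => ?_)
  exact volume_sublevel_add_volume_sublevel_le hφ₀ hφ₁ h rfl rfl ha₀ ha hb₀ hb _

theorem borellBrascampLieb_volume_real : BorellBrascampLieb (volume : Measure ℝ) 1 := by
  intro α hα φ₀ φ₁ φ hφ₀ hφ₁ hφ h
  have hp : 0 ≤ 1 + α := by linarith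
  have hpos : ∀ (ψ : ℝ → ℝ≥0∞) (n : ℕ), ⨅ x, (ψ x + (n : ℝ≥0∞)⁻¹) ≠ 0 := fun ψ n =>
    ne_bot_of_le_ne_bot (b := (n : ℝ≥0∞)⁻¹) (by simp) (le_iInf fun x => le_add_self)
  refine ge_of_tendsto' ((tendsto_prekopaFunctional_add_inv hp hφ₀).add
    (tendsto_prekopaFunctional_add_inv hp hφ₁)) fun n => ?_
  refine prekopaFunctional_le_add_of_iInf_ne_zero hα (hφ₀.add_const _) (hφ₁.add_const _) hφ
    (fun x y => (h x y).trans ?_) (hpos φ₀ n) (hpos φ₁ n)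
  gcongr <;> exact le_self_add

end RealLine

section Operations

variable {F G : Type*} [MeasurableSpace F] [MeasurableSpace G] {μ : Measure F} {ν : Measure G}
  {d e α : ℝ} {φ : F → ℝ≥0∞}

lemma mul_rpow_of_left_ne_zero_of_ne_top {c : ℝ≥0∞} (hc₀ : c ≠ 0) (hc : c ≠ ∞) (x : ℝ≥0∞) (p : ℝ) :
    (c * x) ^ p = c ^ p * x ^ p := by
  rw [ENNReal.mul_rpow_eq_ite]
  simp [hc₀, hc]

lemma prekopaFunctional_prod [SFinite ν] (hdα : 0 < d + α) {φ : F × G → ℝ≥0∞} (hφ : Measurable φ) :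
    prekopaFunctional (μ.prod ν) (d + e) α φ =
      prekopaFunctional μ d α fun x => prekopaFunctional ν e (d + α) fun y => φ (x, y) := by
  simp only [prekopaFunctional, rpow_neg_inv_rpow_neg hdα.ne']
  rw [lintegral_prod _ (by fun_prop)]
  simp only [show d + e + α = e + (d + α) by ring]

lemma measurable_prekopaFunctional [SFinite ν] {φ : F × G → ℝ≥0∞} (hφ : Measurable φ) :
    Measurable fun x => prekopaFunctional ν d α fun y => φ (x, y) :=
  (hφ.pow_const _).lintegral_prod_right'.pow_const _

theorem BorellBrascampLieb.prod [Add F] [Add G] [SFinite ν] (hd : 0 ≤ d)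
    (hμ : BorellBrascampLieb μ d) (hν : BorellBrascampLieb ν e) :
    BorellBrascampLieb (μ.prod ν) (d + e) := by
  intro α hα φ₀ φ₁ φ hφ₀ hφ₁ hφ h
  have hdα : 0 < d + α := by linarith
  simp only [prekopaFunctional_prod hdα, hφ₀, hφ₁, hφ]
  refine hμ hα (measurable_prekopaFunctional hφ₀) (measurable_prekopaFunctional hφ₁)
    (measurable_prekopaFunctional hφ) fun x x' => ?_
  exact hν hdα (by fun_prop) (by fun_prop) (by fun_prop) fun y y' => h (x, y) (x', y')

theorem BorellBrascampLieb.map [Add F] [Add G] (hμ : BorellBrascampLieb μ d) (f : F →ₙ+ G)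
    (hf : Measurable f) : BorellBrascampLieb (μ.map f) d := by
  intro α hα φ₀ φ₁ φ hφ₀ hφ₁ hφ h
  have hmap : ∀ {ψ : G → ℝ≥0∞}, Measurable ψ →
      prekopaFunctional (μ.map f) d α ψ = prekopaFunctional μ d α (ψ ∘ f) := fun hψ => by
    rw [prekopaFunctional, lintegral_map (hψ.pow_const _) hf]
    rfl
  rw [hmap hφ₀, hmap hφ₁, hmap hφ]
  refine hμ hα (hφ₀.comp hf) (hφ₁.comp hf) (hφ.comp hf) fun x y => ?_
  simpa using h (f x) (f y)

lemma prekopaFunctional_smul_measure {c : ℝ≥0∞} (hc₀ : c ≠ 0) (hc : c ≠ ∞) :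
    prekopaFunctional (c • μ) d α φ = c ^ (-α⁻¹) * prekopaFunctional μ d α φ := by
  simp only [prekopaFunctional, lintegral_smul_measure, smul_eq_mul,
    mul_rpow_of_left_ne_zero_of_ne_top hc₀ hc]

theorem BorellBrascampLieb.smul [Add F] (hμ : BorellBrascampLieb μ d) {c : ℝ≥0} (hc : c ≠ 0) :
    BorellBrascampLieb (c • μ) d := by
  intro α hα φ₀ φ₁ φ hφ₀ hφ₁ hφ h
  simp only [← Measure.coe_nnreal_smul c μ, prekopaFunctional_smul_measure
    (ENNReal.coe_ne_zero.2 hc) ENNReal.coe_ne_top, ← mul_add]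
  gcongr
  exact hμ hα hφ₀ hφ₁ hφ h

lemma borellBrascampLieb_dirac [AddZeroClass F] : BorellBrascampLieb (Measure.dirac (0 : F)) 0 := by
  intro α hα φ₀ φ₁ φ hφ₀ hφ₁ hφ h
  have hdirac : ∀ {ψ : F → ℝ≥0∞}, Measurable ψ →
      prekopaFunctional (Measure.dirac (0 : F)) 0 α ψ = ψ 0 := fun hψ => by
    rw [prekopaFunctional, lintegral_dirac' _ (hψ.pow_const _), zero_add, ← ENNReal.rpow_mul,
      neg_mul_neg, mul_inv_cancel₀ hα.ne', ENNReal.rpow_one]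
  simpa [hdirac, hφ₀, hφ₁, hφ] using h 0 0

theorem borellBrascampLieb_volume_pi (n : ℕ) :
    BorellBrascampLieb (volume : Measure (Fin n → ℝ)) n := by
  induction n with
  | zero =>
    rw [Measure.volume_pi_eq_dirac 0, Nat.cast_zero]
    exact borellBrascampLieb_dirac
  | succ n ih =>
    have hf := (volume_preserving_piFinSuccAbove (fun _ : Fin (n + 1) => ℝ) 0).symm
    let f : ℝ × (Fin n → ℝ) →ₙ+ (Fin (n + 1) → ℝ) :=
      { toFun := (MeasurableEquiv.piFinSuccAbove (fun _ => ℝ) 0).symm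
        map_add' := fun x y => Fin.insertNth_add (α := fun _ => ℝ) 0 x.1 y.1 x.2 y.2 }
    rw [Nat.cast_succ, add_comm (n : ℝ), ← hf.map_eq]
    exact (borellBrascampLieb_volume_real.prod zero_le_one ih).map f hf.measurable

end Operations

section FiniteDimensional

variable {E F : Type*} [AddCommGroup E] [Module ℝ E] [NormedAddCommGroup F] [NormedSpace ℝ F]
  [FiniteDimensional ℝ F] [MeasurableSpace F] [BorelSpace F] (μ : Measure F) [μ.IsAddHaarMeasure]
  {α : ℝ}

theorem borellBrascampLieb_addHaar : BorellBrascampLieb μ (finrank ℝ F) := by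
  let e : (Fin (finrank ℝ F) → ℝ) ≃L[ℝ] F := ContinuousLinearEquiv.ofFinrankEq (finrank_fin_fun ℝ)
  have := e.isAddHaarMeasure_map volume
  rw [Measure.isAddLeftInvariant_eq_smul μ (volume.map e)]
  exact ((borellBrascampLieb_volume_pi _).map (AddHomClass.toAddHom e) e.continuous.measurable).smul
    (Measure.addHaarScalarFactor_pos_of_isAddHaarMeasure _ _).ne'

lemma map_inv_smul_addHaar {u : ℝ≥0} (hu : u ≠ 0) :
    μ.map (u⁻¹ • ·) = (u : ℝ≥0∞) ^ (finrank ℝ F : ℝ) • μ := by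
  have hu' : (u⁻¹ : ℝ) ≠ 0 := by simpa
  refine (Measure.map_addHaar_smul μ hu').trans ?_
  rw [inv_pow, inv_inv, abs_of_nonneg (by positivity), ENNReal.ofReal_pow u.coe_nonneg,
    ENNReal.ofReal_coe_nnreal, ENNReal.rpow_natCast]

lemma prekopaFunctional_smul_comp_inv_smul (hα : α ≠ 0) {φ : F → ℝ≥0∞} (hφ : Measurable φ)
    {u : ℝ≥0} (hu : u ≠ 0) :
    prekopaFunctional μ (finrank ℝ F) α (fun x => u • φ (u⁻¹ • x)) =
      u • prekopaFunctional μ (finrank ℝ F) α φ := by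
  set d := (finrank ℝ F : ℝ)
  have hu₀ : (u : ℝ≥0∞) ≠ 0 := ENNReal.coe_ne_zero.2 hu
  have hlintegral : ∫⁻ x, ((u : ℝ≥0∞) * φ (u⁻¹ • x)) ^ (-(d + α)) ∂μ =
      (u : ℝ≥0∞) ^ (-α) * ∫⁻ x, φ x ^ (-(d + α)) ∂μ := by
    calc ∫⁻ x, ((u : ℝ≥0∞) * φ (u⁻¹ • x)) ^ (-(d + α)) ∂μ
        = (u : ℝ≥0∞) ^ (-(d + α)) * ∫⁻ x, φ x ^ (-(d + α)) ∂μ.map (u⁻¹ • ·) := by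
          rw [lintegral_map (hφ.pow_const _) (measurable_const_smul u⁻¹),
            ← lintegral_const_mul' _ _ (by finiteness)]
          simp only [mul_rpow_of_left_ne_zero_of_ne_top hu₀ ENNReal.coe_ne_top]
      _ = (u : ℝ≥0∞) ^ (-α) * ∫⁻ x, φ x ^ (-(d + α)) ∂μ := by
          rw [map_inv_smul_addHaar μ hu, lintegral_smul_measure, smul_eq_mul, ← mul_assoc,
            ← ENNReal.rpow_add _ _ hu₀ ENNReal.coe_ne_top, show -(d + α) + d = -α by ring]
  simp only [prekopaFunctional, ENNReal.smul_def, smul_eq_mul]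
  rw [hlintegral, mul_rpow_of_left_ne_zero_of_ne_top (by simp [*]) (by finiteness),
    ← ENNReal.rpow_mul, neg_mul_neg, mul_inv_cancel₀ hα, ENNReal.rpow_one]

theorem convexOn_prekopaFunctional (hα : 0 < α) {φ : E × F → ℝ≥0∞}
    (hφ : ∀ t, Measurable fun x => φ (t, x)) (hconv : ConvexOn ℝ≥0 univ φ) :
    ConvexOn ℝ≥0 univ fun t => prekopaFunctional μ (finrank ℝ F) α fun x => φ (t, x) := by
  refine convexOn_iff_forall_pos.2 ⟨convex_univ, fun t₀ _ t₁ _ a b ha hb hab => ?_⟩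
  rw [← prekopaFunctional_smul_comp_inv_smul μ hα.ne' (hφ t₀) ha.ne',
    ← prekopaFunctional_smul_comp_inv_smul μ hα.ne' (hφ t₁) hb.ne']
  refine borellBrascampLieb_addHaar μ hα
    (((hφ t₀).comp (measurable_const_smul a⁻¹)).const_smul a)
    (((hφ t₁).comp (measurable_const_smul b⁻¹)).const_smul b) (hφ _) fun x y => ?_
  simpa [smul_inv_smul₀, ha.ne', hb.ne'] using hconv.2 (mem_univ (t₀, a⁻¹ • x))
    (mem_univ (t₁, b⁻¹ • y)) ha.le hb.le hab

end FiniteDimensional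

section Real

lemma convexOn_ofReal_iff {E : Type*} [AddCommGroup E] [Module ℝ E] {f : E → ℝ}
    (hf : ∀ x, 0 ≤ f x) :
    ConvexOn ℝ≥0 univ (fun x => ENNReal.ofReal (f x)) ↔ ConvexOn ℝ univ f := by
  have hcombo : ∀ (a b : ℝ≥0) (x y : E),
      a • ENNReal.ofReal (f x) + b • ENNReal.ofReal (f y) =
        ENNReal.ofReal ((a : ℝ) • f x + (b : ℝ) • f y) := fun a b x y => by
    have := hf x
    have := hf y
    rw [ENNReal.ofReal_add (by positivity) (by positivity)]
    simp [ENNReal.smul_def, ENNReal.ofReal_mul]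
  have hcombo_nonneg : ∀ (a b : ℝ≥0) (x y : E), 0 ≤ (a : ℝ) • f x + (b : ℝ) • f y :=
    fun a b x y => by have := hf x; have := hf y; positivity
  constructor
  · refine fun h => ⟨convex_univ, fun x _ y _ a b ha hb hab => ?_⟩
    lift a to ℝ≥0 using ha
    lift b to ℝ≥0 using hb
    rw [← ENNReal.ofReal_le_ofReal_iff (hcombo_nonneg a b x y), ← hcombo]
    exact h.2 (mem_univ x) (mem_univ y) a.2 b.2 (by exact_mod_cast hab)
  · refine fun h => ⟨convex_univ, fun x _ y _ a b _ _ hab => ?_⟩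
    rw [hcombo]
    exact ENNReal.ofReal_le_ofReal (h.2 (mem_univ x) (mem_univ y) a.2 b.2 (by exact_mod_cast hab))

lemma prekopaFunctional_ofReal {F : Type*} [MeasurableSpace F] {μ : Measure F} [NeZero μ]
    {d α : ℝ} {ψ : F → ℝ} (hψ : ∀ x, 0 < ψ x) (hint : Integrable (fun x => ψ x ^ (-d - α)) μ) :
    prekopaFunctional μ d α (fun x => ENNReal.ofReal (ψ x)) =
      ENNReal.ofReal ((∫ x, ψ x ^ (-d - α) ∂μ) ^ (-1 / α)) := by
  have hpos : 0 < ∫ x, ψ x ^ (-d - α) ∂μ := by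
    rw [integral_pos_iff_support_of_nonneg (fun x => (Real.rpow_pos_of_pos (hψ x) _).le) hint,
      Function.support_eq_univ fun x => (Real.rpow_pos_of_pos (hψ x) _).ne']
    exact Measure.measure_univ_pos.2 (NeZero.ne μ)
  simp only [prekopaFunctional, ENNReal.ofReal_rpow_of_pos (hψ _), neg_add']
  rw [← ofReal_integral_eq_lintegral_ofReal hint
      (ae_of_all _ fun x => (Real.rpow_pos_of_pos (hψ x) _).le),
    ENNReal.ofReal_rpow_of_pos hpos, neg_div, one_div]

end Real

theorem dimensional_prekopa_general {E F : Type*} [AddCommGroup E] [Module ℝ E]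
    [NormedAddCommGroup F] [NormedSpace ℝ F] [FiniteDimensional ℝ F] [MeasurableSpace F]
    [BorelSpace F] (μ : Measure F) [μ.IsAddHaarMeasure] {α : ℝ} (hα : 0 < α) {φ : E × F → ℝ}
    (hφpos : ∀ p, 0 < φ p) (hφconv : ConvexOn ℝ univ φ)
    (hint : ∀ t, Integrable (fun x => φ (t, x) ^ (-(finrank ℝ F : ℝ) - α)) μ) :
    ConvexOn ℝ univ fun t => (∫ x, φ (t, x) ^ (-(finrank ℝ F : ℝ) - α) ∂μ) ^ (-1 / α) := by
  have hfibre : ∀ t, Continuous fun x => φ (t, x) := fun t =>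
    (hφconv.comp_affineMap <| (AffineMap.const ℝ F t).prod
      (AffineMap.id ℝ F)).locallyLipschitz.continuous
  rw [← convexOn_ofReal_iff fun t => Real.rpow_nonneg
    (integral_nonneg fun x => Real.rpow_nonneg (hφpos _).le _) _]
  simp only [← prekopaFunctional_ofReal (fun x => hφpos (_, x)) (hint _)]
  exact convexOn_prekopaFunctional μ hα (fun t => (hfibre t).measurable.ennreal_ofReal)
    ((convexOn_ofReal_iff fun p => (hφpos p).le).2 hφconv)

/-- Functional Brunn principle (dimensional Prékopa). -/
theorem dimensional_prekopa (n : ℕ) (α : ℝ) (hα : 0 < α)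
    (φ : ℝ × EuclideanSpace ℝ (Fin n) → ℝ)
    (hφpos : ∀ p, 0 < φ p)
    (hφconv : ConvexOn ℝ Set.univ φ)
    (hint : ∀ t : ℝ, Integrable (fun x => φ (t, x) ^ (-(n : ℝ) - α)))
    (hpos : ∀ t : ℝ, 0 < ∫ x, φ (t, x) ^ (-(n : ℝ) - α)) :
    ConvexOn ℝ Set.univ
      (fun t : ℝ => (∫ x, φ (t, x) ^ (-(n : ℝ) - α)) ^ (-1 / α)) := by
  simpa using dimensional_prekopa_general volume hα hφpos hφconv (by simpa using hint)
end

section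
/- Let F : (ℝⁿ)^N → ℝ₊ satisfy: for all x₁, …, x_N ∈ ℝⁿ and 0 ≤ sᵢ ≤ tᵢ (i ≤ N), F(s₁x₁, …, s_N x_N) ≥ F(t₁x₁, …, t_N x_N). If g₁, …, g_N : ℝ₊ → [0, 1] are integrable with ∫_{ℝⁿ} gᵢ(|x|) dx = 1 for each i, then ∫ F(x₁, …, x_N) Πᵢ gᵢ(|xᵢ|) dx ≤ ∫ F(x₁, …, x_N) Πᵢ 1_{[0, rₙ]}(|xᵢ|) dx, where rₙ is the radius of the Euclidean ball Dₙ of volume one. -/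
open MeasureTheory

/-!
Since `g ≤ 1`, the mass that the measure `g(|x|) dx` gives to a ball centred at the origin is at
most the volume of that ball. Sending each `x` to the point in the same direction whose norm is
the radius of the ball with volume equal to the `g`-mass of the ball of radius `|x|` is
therefore a contraction towards the origin, and it transports `g(|x|) dx` to the uniform
distribution on a ball. Applied in every coordinate, these maps can only increase `F`.
-/

section

open Measure Set Metric Filter
open scoped ENNReal NNReal

lemma monotone_measure_Iic {α : Type*} [Preorder α] [MeasurableSpace α] (κ : Measure α) :
    Monotone fun x => κ (Iic x) :=
  fun _ _ hxy => measure_mono (Iic_subset_Iic.2 hxy)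

section LinearOrder

variable {α : Type*} [TopologicalSpace α] [LinearOrder α] [OrderTopology α]
  [SecondCountableTopology α] [MeasurableSpace α] [BorelSpace α]

lemma measure_le_of_isLowerSet (κ : Measure α) {s : Set α} (hs : IsLowerSet s) {c : ℝ≥0∞}
    (h : ∀ x ∈ s, κ (Iic x) ≤ c) : κ s ≤ c := by
  have := hs.ordConnected
  have hs_meas : MeasurableSet s := hs.ordConnected.measurableSet
  rcases s.eq_empty_or_nonempty with rfl | hne
  · simp
  have := hne.to_subtype
  have hlim := tendsto_measure_Iic_atTop (κ.comap ((↑) : s → α))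
  rw [comap_subtype_coe_apply hs_meas, image_univ, Subtype.range_coe] at hlim
  refine le_of_tendsto' hlim fun x => ?_
  rw [comap_subtype_coe_apply hs_meas]
  exact (measure_mono (image_subset_iff.2 fun y hy => hy)).trans (h x x.2)

lemma measure_le_of_isUpperSet (κ : Measure α) {s : Set α} (hs : IsUpperSet s) {c : ℝ≥0∞}
    (h : ∀ x ∈ s, κ (Ici x) ≤ c) : κ s ≤ c :=
  measure_le_of_isLowerSet (α := αᵒᵈ) κ hs.toDual h

lemma measure_eq_min_of_measure_Iic (κ : Measure α) [IsFiniteMeasure κ] [NullSingletonClass κ]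
    {s : Set α} {c : ℝ≥0∞} (h_lt : ∀ x, κ (Iic x) < c → x ∈ s) (h_le : ∀ x ∈ s, κ (Iic x) ≤ c) :
    κ s = min c (κ univ) := by
  have hmono := monotone_measure_Iic κ
  refine le_antisymm (le_min ?_ (measure_mono s.subset_univ)) ?_
  · calc κ s ≤ κ {x | κ (Iic x) ≤ c} := measure_mono h_le
      _ ≤ c := measure_le_of_isLowerSet κ (fun x y hyx hx => (hmono hyx).trans hx) fun x hx => hx
  rcases sᶜ.eq_empty_or_nonempty with hempty | ⟨x₀, hx₀⟩
  · simp [compl_empty_iff.1 hempty]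
  have h_compl : ∀ x ∈ {x | c ≤ κ (Iic x)}, κ (Ici x) ≤ κ univ - c := fun x hx => by
    rw [← measure_congr Ioi_ae_eq_Ici, ← compl_Iic,
      measure_compl measurableSet_Iic (measure_ne_top _ _)]
    exact tsub_le_tsub_left hx _
  have hc : c ≤ κ univ := (not_lt.1 (mt (h_lt x₀) hx₀)).trans (measure_mono (subset_univ _))
  have h_univ : c + κ sᶜ ≤ κ s + κ sᶜ := calc
    c + κ sᶜ ≤ c + κ {x | c ≤ κ (Iic x)} := by
      gcongr
      exact fun x hx => not_lt.1 (mt (h_lt x) hx)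
    _ ≤ c + (κ univ - c) := by
      gcongr
      exact measure_le_of_isUpperSet κ (fun x y hxy hx => hx.trans (hmono hxy)) h_compl
    _ = κ univ := add_tsub_cancel_of_le hc
    _ ≤ κ s + κ sᶜ := union_compl_self s ▸ measure_union_le s sᶜ
  exact (min_le_left _ _).trans (ENNReal.le_of_add_le_add_right (measure_ne_top _ _) h_univ)

lemma measurePreserving_restrict_Iic {β : Type*} [TopologicalSpace β] [LinearOrder β]
    [OrderTopology β] [SecondCountableTopology β] [MeasurableSpace β] [BorelSpace β]
    {κ : Measure α} [IsFiniteMeasure κ] [NullSingletonClass κ] {ν : Measure β} {φ : α → β}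
    (hφ : Measurable φ) (hφν : ∀ x, ν (Iic (φ x)) = κ (Iic x)) {R : β}
    (hR : κ univ = ν (Iic R)) :
    MeasurePreserving φ κ (ν.restrict (Iic R)) := by
  have hmono := monotone_measure_Iic ν
  refine ⟨hφ, ext_of_Iic _ _ fun a => ?_⟩
  rw [map_apply hφ measurableSet_Iic, Measure.restrict_apply measurableSet_Iic, Iic_inter_Iic]
  calc κ (φ ⁻¹' Iic a) = min (ν (Iic a)) (κ univ) := by
        refine measure_eq_min_of_measure_Iic κ (fun x hx => ?_) fun x hx => ?_
        · rw [← hφν] at hx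
          exact (hmono.reflect_lt hx).le
        · rw [← hφν]
          exact hmono hx
    _ = ν (Iic (min a R)) := by rw [hR, ← hmono.map_min]

end LinearOrder

section Radial

/-- The measure `r ^ k dr` on the half-line `[0, ∞)`. It is carried by `ℝ≥0` rather than by
`Ioi 0` so that the radius `0`, where a radial contraction may send points, is a coordinate. -/
noncomputable def radialVolume (k : ℕ) : Measure ℝ≥0 :=
  (volumeIoiPow k).map fun r => r.1.toNNReal

lemma measurable_toNNReal_coe_Ioi : Measurable fun r : Ioi (0 : ℝ) => r.1.toNNReal :=
  measurable_real_toNNReal.comp measurable_subtype_coe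

instance (k : ℕ) : SFinite (radialVolume k) := by
  unfold radialVolume; infer_instance

lemma nullSingletonClass_volumeIoiPow (k : ℕ) : NullSingletonClass (volumeIoiPow k) where
  measure_singleton r := by
    refine withDensity_absolutelyContinuous _ _ ?_
    rw [comap_subtype_coe_apply measurableSet_Ioi]
    simp

lemma radialVolume_Iic (k : ℕ) (a : ℝ≥0) :
    radialVolume k (Iic a) = (a ^ (k + 1) / (k + 1) : ℝ≥0) := by
  have := nullSingletonClass_volumeIoiPow k
  rw [radialVolume, map_apply measurable_toNNReal_coe_Ioi measurableSet_Iic]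
  rcases eq_zero_or_pos a with rfl | ha
  · have : (fun r : Ioi (0 : ℝ) => r.1.toNNReal) ⁻¹' Iic 0 = ∅ := by
      ext r
      simpa using r.2.out
    simp [this]
  · have : (fun r : Ioi (0 : ℝ) => r.1.toNNReal) ⁻¹' Iic a = Iic ⟨a, ha⟩ := by
      ext r
      simp [Real.toNNReal_le_iff_le_coe, ← Subtype.coe_le_coe]
    rw [this, ← measure_congr Iio_ae_eq_Iic, volumeIoiPow_apply_Iio,
      ENNReal.ofReal_eq_coe_nnreal (by positivity)]
    congr 1

lemma radialVolume_Iic_mul (k : ℕ) (c r : ℝ≥0) :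
    radialVolume k (Iic (c * r)) = c ^ (k + 1) * radialVolume k (Iic r) := by
  simp only [radialVolume_Iic]
  norm_cast
  ring

instance (k : ℕ) : NullSingletonClass (radialVolume k) where
  measure_singleton r := by
    have := nullSingletonClass_volumeIoiPow k
    rw [radialVolume, map_apply measurable_toNNReal_coe_Ioi (measurableSet_singleton r)]
    refine Set.Subsingleton.measure_zero (fun x hx y hy => Subtype.ext ?_) _
    exact (Real.toNNReal_eq_toNNReal_iff x.2.out.le y.2.out.le).1 (hx.trans hy.symm)

lemma exists_contraction_measurePreserving_radialVolume (k : ℕ) {κ : Measure ℝ≥0}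
    (hκ : κ ≤ radialVolume k) {R : ℝ≥0} (hR : κ univ = radialVolume k (Iic R)) :
    ∃ c : ℝ≥0 → ℝ≥0, Measurable c ∧ (∀ r, c r ≤ 1) ∧
      MeasurePreserving (fun r => c r * r) κ ((radialVolume k).restrict (Iic R)) := by
  have h_ne_top (r : ℝ≥0) : radialVolume k (Iic r) ≠ ∞ := by
    rw [radialVolume_Iic]
    exact ENNReal.coe_ne_top
  have : IsFiniteMeasure κ := ⟨hR ▸ (h_ne_top R).lt_top⟩
  have : NullSingletonClass κ := ⟨fun r => (absolutelyContinuous_of_le hκ) (measure_singleton r)⟩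
  -- The volume of `[0, c r * r]` is `c r ^ (k + 1)` times that of `[0, r]`, hence the root in `c`.
  let q (r : ℝ≥0) : ℝ≥0∞ := κ (Iic r) / radialVolume k (Iic r)
  have hq_le (r : ℝ≥0) : q r ≤ 1 := ENNReal.div_le_of_le_mul (by simpa using hκ (Iic r))
  have hq_meas : Measurable q :=
    (monotone_measure_Iic κ).measurable.div (monotone_measure_Iic _).measurable
  let c (r : ℝ≥0) : ℝ≥0 := (q r).toNNReal ^ ((k + 1 : ℕ) : ℝ)⁻¹
  have hc : Measurable c := hq_meas.ennreal_toNNReal.pow_const _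
  refine ⟨c, hc, fun r => ?_,
    measurePreserving_restrict_Iic (hc.mul measurable_id') (fun r => ?_) hR⟩
  · exact NNReal.rpow_le_one (ENNReal.toNNReal_mono ENNReal.one_ne_top (hq_le r)) (by positivity)
  · have hc_pow : (c r : ℝ≥0∞) ^ (k + 1) = q r := by
      rw [← ENNReal.coe_pow, NNReal.rpow_inv_natCast_pow _ k.succ_ne_zero,
        ENNReal.coe_toNNReal ((hq_le r).trans_lt ENNReal.one_lt_top).ne]
    rw [Pi.mul_apply, radialVolume_Iic_mul, hc_pow]
    exact ENNReal.div_mul_cancel' (fun h => le_zero_iff.1 (h ▸ hκ (Iic r)))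
      fun h => absurd h (h_ne_top r)

end Radial

lemma measurePreserving_withDensity {α β : Type*} [MeasurableSpace α] [MeasurableSpace β]
    {μ : Measure α} {ν : Measure β} {f : α → β} (hf : MeasurePreserving f μ ν) {ρ : β → ℝ≥0∞}
    (hρ : AEMeasurable ρ ν) :
    MeasurePreserving f (μ.withDensity (ρ ∘ f)) (ν.withDensity ρ) := by
  refine ⟨hf.measurable, ext fun s hs => ?_⟩
  have hfs := hf.restrict_preimage hs
  rw [map_apply hf.measurable hs, withDensity_apply _ hs, withDensity_apply _ (hf.measurable hs),
    ← hfs.map_eq, lintegral_map' (hfs.map_eq ▸ hρ.restrict) hfs.aemeasurable]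
  rfl

section Polar

variable {E : Type*} [NormedAddCommGroup E] [NormedSpace ℝ E]

/-- Polar coordinates `(θ, r) ↦ r θ` on a normed space. -/
def polarMap (p : sphere (0 : E) 1 × ℝ≥0) : E := p.2 • p.1.1

lemma nnnorm_polarMap (p : sphere (0 : E) 1 × ℝ≥0) : ‖polarMap p‖₊ = p.2 := by
  rw [← NNReal.coe_inj, coe_nnnorm, polarMap, NNReal.smul_def, norm_smul, norm_eq_of_mem_sphere,
    mul_one, NNReal.norm_eq]

variable [MeasurableSpace E] [BorelSpace E] [FiniteDimensional ℝ E] (μ : Measure E)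
  [μ.IsAddHaarMeasure]

open Module (finrank)

lemma measurePreserving_polarMap [Nontrivial E] :
    MeasurePreserving polarMap (μ.toSphere.prod (radialVolume (finrank ℝ E - 1))) μ := by
  have h_meas : Measurable (polarMap : sphere (0 : E) 1 × ℝ≥0 → E) := by
    unfold polarMap
    fun_prop
  have h_coord : Measurable (Prod.map (id : sphere (0 : E) 1 → _) fun r : Ioi (0 : ℝ) =>
      r.1.toNNReal) := measurable_id.prodMap measurable_toNNReal_coe_Ioi
  have h_comp : polarMap ∘ Prod.map id (fun r : Ioi (0 : ℝ) => r.1.toNNReal) =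
      Subtype.val ∘ (homeomorphUnitSphereProd E).toMeasurableEquiv.symm := by
    ext p
    simp [polarMap, homeomorphUnitSphereProd, NNReal.smul_def, p.2.2.out.le]
  have h_preserving := (measurePreserving_subtype_coe (measurableSet_singleton 0).compl).comp
    (MeasurePreserving.symm (homeomorphUnitSphereProd E).toMeasurableEquiv
      μ.measurePreserving_homeomorphUnitSphereProd)
  rw [restrict_compl_singleton, ← h_comp] at h_preserving
  rw [radialVolume]
  nth_rw 1 [← Measure.map_id (μ := μ.toSphere)]
  rw [map_prod_map _ _ measurable_id measurable_toNNReal_coe_Ioi]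
  exact h_preserving.map_of_comp h_meas h_coord

lemma measurePreserving_polarMap_restrict_closedBall [Nontrivial E] (R : ℝ≥0) :
    MeasurePreserving polarMap
      (μ.toSphere.prod ((radialVolume (finrank ℝ E - 1)).restrict (Iic R)))
      (μ.restrict (closedBall 0 R)) := by
  have h_preimage : polarMap ⁻¹' closedBall (0 : E) R = univ ×ˢ Iic R := by
    ext p
    simp [← coe_nnnorm, nnnorm_polarMap]
  have := (measurePreserving_polarMap μ).restrict_preimage (s := closedBall 0 R)
    measurableSet_closedBall
  rwa [h_preimage, ← Measure.prod_restrict, Measure.restrict_univ] at this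

variable {μ}

lemma aemeasurable_of_comp_nnnorm [Nontrivial E] {f : ℝ≥0 → ℝ≥0∞}
    (hf : AEMeasurable (fun x : E => f ‖x‖₊) μ) :
    AEMeasurable f (radialVolume (finrank ℝ E - 1)) := by
  have hpolar := measurePreserving_polarMap μ
  have : AEMeasurable (fun p : sphere (0 : E) 1 × ℝ≥0 => f p.2)
      (μ.toSphere.prod (radialVolume (finrank ℝ E - 1))) := by
    simpa only [Function.comp_def, nnnorm_polarMap] using
      hf.comp_quasiMeasurePreserving hpolar.quasiMeasurePreserving
  exact (this.aestronglyMeasurable.of_comp_snd μ.toSphere_ne_zero).aemeasurable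

lemma measurePreserving_polarMap_withDensity [Nontrivial E] {f : ℝ≥0 → ℝ≥0∞}
    (hf : AEMeasurable (fun x : E => f ‖x‖₊) μ) :
    MeasurePreserving polarMap
      (μ.toSphere.prod ((radialVolume (finrank ℝ E - 1)).withDensity f))
      (μ.withDensity fun x => f ‖x‖₊) := by
  rw [prod_withDensity_right₀ (aemeasurable_of_comp_nnnorm hf)]
  simpa only [Function.comp_def, nnnorm_polarMap] using
    measurePreserving_withDensity (measurePreserving_polarMap μ) hf

lemma exists_contraction_measurePreserving_restrict_closedBall {f : ℝ≥0 → ℝ≥0∞}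
    (hf : AEMeasurable (fun x : E => f ‖x‖₊) μ) (hf_le : ∀ r, f r ≤ 1) {R : ℝ≥0}
    (hR : ∫⁻ x, f ‖x‖₊ ∂μ = μ (closedBall 0 R)) :
    ∃ c : E → ℝ≥0, (∀ x, c x ≤ 1) ∧
      MeasurePreserving (fun x => c x • x) (μ.withDensity fun x => f ‖x‖₊)
        (μ.restrict (closedBall 0 R)) := by
  have h_mass : μ.withDensity (fun x => f ‖x‖₊) univ = μ.restrict (closedBall 0 R) univ := by
    simpa using hR
  rcases subsingleton_or_nontrivial E with _ | _
  · refine ⟨fun _ => 1, fun _ => le_rfl, by fun_prop, ext fun s _ => ?_⟩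
    rcases s.eq_empty_or_nonempty with rfl | hs
    · simp
    · simpa [hs.eq_univ] using hR
  set ν := radialVolume (finrank ℝ E - 1)
  have hκ := measurePreserving_polarMap_withDensity hf
  have hB := measurePreserving_polarMap_restrict_closedBall μ R
  have h_radial_mass : ν.withDensity f univ = ν (Iic R) := by
    rw [← hκ.measure_preimage MeasurableSet.univ.nullMeasurableSet,
      ← hB.measure_preimage MeasurableSet.univ.nullMeasurableSet, preimage_univ,
      ← univ_prod_univ, prod_prod, prod_prod, restrict_apply_univ] at h_mass
    exact (ENNReal.mul_right_inj (measure_univ_ne_zero.2 μ.toSphere_ne_zero)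
      (measure_ne_top _ _)).1 h_mass
  have h_le : ν.withDensity f ≤ ν := by
    simpa using withDensity_mono (μ := ν) (g := 1) (ae_of_all _ hf_le)
  obtain ⟨c, hc, hc_le, hcν⟩ :=
    exists_contraction_measurePreserving_radialVolume _ h_le h_radial_mass
  have h_comp : (fun x : E => c ‖x‖₊ • x) ∘ polarMap = polarMap ∘ Prod.map id fun r => c r * r := by
    ext p
    simp only [Function.comp_apply, nnnorm_polarMap]
    exact (mul_smul (c p.2) p.2 p.1.1).symm
  have hT := hB.comp ((MeasurePreserving.id μ.toSphere).prod hcν)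
  rw [← h_comp] at hT
  refine ⟨fun x => c ‖x‖₊, fun x => hc_le _, hκ.map_eq ▸ hT.map_of_comp ?_ hκ.measurable⟩
  fun_prop

end Polar

section Pi

variable {ι : Type*} [Fintype ι] {X : ι → Type*} [∀ i, MeasurableSpace (X i)]
  {μ : ∀ i, Measure (X i)} [∀ i, SigmaFinite (μ i)] {ρ : ∀ i, X i → ℝ}

lemma pi_withDensity_ofReal (hρ : ∀ i, Integrable (ρ i) (μ i)) (hρ_nonneg : ∀ i x, 0 ≤ ρ i x) :
    Measure.pi (fun i => (μ i).withDensity fun x => ENNReal.ofReal (ρ i x)) =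
      (Measure.pi μ).withDensity fun x => ENNReal.ofReal (∏ i, ρ i (x i)) := by
  have (i : ι) : IsFiniteMeasure ((μ i).withDensity fun x => ENNReal.ofReal (ρ i x)) :=
    isFiniteMeasure_withDensity_ofReal (hρ i).2
  refine pi_eq fun s hs => ?_
  rw [withDensity_apply _ (MeasurableSet.univ_pi hs), restrict_pi_pi,
    ← ofReal_integral_eq_lintegral_ofReal (.fintype_prod_dep fun i => (hρ i).restrict)
      (ae_of_all _ fun x => Finset.prod_nonneg fun i _ => hρ_nonneg i _),
    integral_fintype_prod_eq_prod,
    ENNReal.ofReal_prod_of_nonneg fun i _ => integral_nonneg (hρ_nonneg i)]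
  refine Finset.prod_congr rfl fun i _ => ?_
  rw [withDensity_apply _ (hs i), ← ofReal_integral_eq_lintegral_ofReal (hρ i).restrict
    (ae_of_all _ (hρ_nonneg i))]

lemma integrable_pi_withDensity_ofReal_iff (hρ : ∀ i, Integrable (ρ i) (μ i))
    (hρ_nonneg : ∀ i x, 0 ≤ ρ i x) {F : (∀ i, X i) → ℝ} :
    Integrable F (Measure.pi fun i => (μ i).withDensity fun x => ENNReal.ofReal (ρ i x)) ↔
      Integrable (fun x => F x * ∏ i, ρ i (x i)) (Measure.pi μ) := by
  have h_nonneg (x : ∀ i, X i) : 0 ≤ ∏ i, ρ i (x i) := Finset.prod_nonneg fun i _ => hρ_nonneg i _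
  rw [pi_withDensity_ofReal hρ hρ_nonneg, integrable_withDensity_iff_integrable_smul₀'
    (Integrable.fintype_prod_dep hρ).aemeasurable.ennreal_ofReal
    (ae_of_all _ fun _ => ENNReal.ofReal_lt_top)]
  simp only [ENNReal.toReal_ofReal (h_nonneg _), smul_eq_mul, mul_comm]

lemma integral_pi_withDensity_ofReal (hρ : ∀ i, Integrable (ρ i) (μ i))
    (hρ_nonneg : ∀ i x, 0 ≤ ρ i x) (F : (∀ i, X i) → ℝ) :
    ∫ x, F x ∂Measure.pi (fun i => (μ i).withDensity fun x => ENNReal.ofReal (ρ i x)) =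
      ∫ x, F x * ∏ i, ρ i (x i) ∂Measure.pi μ := by
  have h_nonneg (x : ∀ i, X i) : 0 ≤ ∏ i, ρ i (x i) := Finset.prod_nonneg fun i _ => hρ_nonneg i _
  rw [pi_withDensity_ofReal hρ hρ_nonneg, integral_withDensity_eq_integral_toReal_smul₀
    (Integrable.fintype_prod_dep hρ).aemeasurable.ennreal_ofReal
    (ae_of_all _ fun _ => ENNReal.ofReal_lt_top)]
  simp only [ENNReal.toReal_ofReal (h_nonneg _), smul_eq_mul, mul_comm]

end Pi

lemma withDensity_ofReal_indicator_one {α : Type*} [MeasurableSpace α] (μ : Measure α) {s : Set α}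
    (hs : MeasurableSet s) :
    μ.withDensity (fun x => ENNReal.ofReal (s.indicator (fun _ => 1) x)) = μ.restrict s := by
  rw [← withDensity_indicator_one hs]
  congr 1 with x
  by_cases hx : x ∈ s <;> simp [hx]

lemma integral_le_integral_of_le_comp {α β : Type*} [MeasurableSpace α] [MeasurableSpace β]
    {μ : Measure α} {ν : Measure β} {T : α → β} (hT : MeasurePreserving T μ ν) {f : α → ℝ}
    {h : β → ℝ} (hf : Integrable f μ) (hh : Integrable h ν) (hle : ∀ x, f x ≤ h (T x)) :
    ∫ x, f x ∂μ ≤ ∫ y, h y ∂ν := by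
  rw [← hT.map_eq] at hh ⊢
  rw [integral_map hT.aemeasurable hh.aestronglyMeasurable]
  exact integral_mono hf (hh.comp_measurable hT.measurable) hle

theorem coordinatewise_decreasing_maximized_general {ι : Type*} [Fintype ι] {E : ι → Type*}
    [∀ i, NormedAddCommGroup (E i)] [∀ i, NormedSpace ℝ (E i)] [∀ i, FiniteDimensional ℝ (E i)]
    [∀ i, MeasurableSpace (E i)] [∀ i, BorelSpace (E i)] (μ : ∀ i, Measure (E i))
    [∀ i, (μ i).IsAddHaarMeasure] (F : (∀ i, E i) → ℝ)
    (hF : ∀ (X : ∀ i, E i) (s : ι → ℝ≥0), (∀ i, s i ≤ 1) → F X ≤ F fun i => s i • X i)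
    (g : ι → ℝ → ℝ) (hg : ∀ i r, g i r ∈ Icc (0 : ℝ) 1) (R : ι → ℝ≥0) (hR : ∀ i, 0 < R i)
    (hmass : ∀ i, ∫ x, g i ‖x‖ ∂μ i = (μ i).real (closedBall 0 (R i)))
    (hint_g : Integrable (fun X => F X * ∏ i, g i ‖X i‖) (Measure.pi μ))
    (hint_ball : Integrable (fun X => F X * ∏ i, (closedBall 0 (R i)).indicator
      (fun _ => (1 : ℝ)) (X i)) (Measure.pi μ)) :
    ∫ X, F X * ∏ i, g i ‖X i‖ ∂Measure.pi μ ≤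
      ∫ X, F X * ∏ i, (closedBall 0 (R i)).indicator (fun _ => (1 : ℝ)) (X i) ∂Measure.pi μ := by
  have hgi (i : ι) : Integrable (fun x => g i ‖x‖) (μ i) := .of_integral_ne_zero <| by
    rw [hmass i, measureReal_def]
    exact ENNReal.toReal_ne_zero.2
      ⟨(measure_closedBall_pos _ _ (hR i)).ne', measure_closedBall_lt_top.ne⟩
  have hball (i : ι) : Integrable ((closedBall 0 (R i)).indicator fun _ => (1 : ℝ)) (μ i) :=
    (integrable_indicator_iff measurableSet_closedBall).2
      (integrableOn_const measure_closedBall_lt_top.ne)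
  have hg_nonneg (i : ι) (x : E i) : 0 ≤ g i ‖x‖ := (hg i _).1
  have hball_nonneg (i : ι) (x : E i) : 0 ≤ (closedBall 0 (R i)).indicator (fun _ => (1 : ℝ)) x :=
    indicator_nonneg (fun _ _ => zero_le_one) x
  choose c hc_le hc using fun i => exists_contraction_measurePreserving_restrict_closedBall
    (μ := μ i) (f := fun r => ENNReal.ofReal (g i r)) (R := R i)
    (hgi i).aemeasurable.ennreal_ofReal (fun r => ENNReal.ofReal_le_one.2 (hg i r).2) <| by
      rw [← ofReal_measureReal measure_closedBall_lt_top.ne, ← hmass i]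
      exact (ofReal_integral_eq_lintegral_ofReal (hgi i) (ae_of_all _ (hg_nonneg i))).symm
  have h_restrict (i : ι) :=
    withDensity_ofReal_indicator_one (μ i) (measurableSet_closedBall (x := 0) (ε := R i))
  rw [← integrable_pi_withDensity_ofReal_iff hgi hg_nonneg] at hint_g
  rw [← integrable_pi_withDensity_ofReal_iff hball hball_nonneg] at hint_ball
  rw [← integral_pi_withDensity_ofReal hgi hg_nonneg,
    ← integral_pi_withDensity_ofReal hball hball_nonneg]
  simp only [h_restrict] at hint_ball ⊢
  exact integral_le_integral_of_le_comp (measurePreserving_pi _ _ hc) hint_g hint_ball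
    fun X => hF X _ fun i => hc_le i _

end

/-- Coordinate-wise decreasing functionals are maximized by uniform distributions on balls. -/
theorem coordinatewise_decreasing_maximized (n N : ℕ)
    (F : (Fin N → EuclideanSpace ℝ (Fin n)) → ℝ)
    (hF0 : ∀ X, 0 ≤ F X)
    (hFmono : ∀ (X : Fin N → EuclideanSpace ℝ (Fin n)) (s t : Fin N → ℝ),
      (∀ i, 0 ≤ s i) → (∀ i, s i ≤ t i) →
      F (fun i => t i • X i) ≤ F (fun i => s i • X i))
    (g : Fin N → ℝ → ℝ) (hg : ∀ i r, g i r ∈ Set.Icc (0 : ℝ) 1)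
    (hgint : ∀ i, ∫ x : EuclideanSpace ℝ (Fin n), g i ‖x‖ = 1)
    (rn : ℝ) (hrn : 0 < rn)
    (hDn : volume (Metric.closedBall (0 : EuclideanSpace ℝ (Fin n)) rn) = 1)
    (hint1 : Integrable (fun X : Fin N → EuclideanSpace ℝ (Fin n) =>
      F X * ∏ i, g i ‖X i‖))
    (hint2 : Integrable (fun X : Fin N → EuclideanSpace ℝ (Fin n) =>
      F X * ∏ i, Set.indicator (Metric.closedBall (0 : EuclideanSpace ℝ (Fin n)) rn)
        (fun _ => (1 : ℝ)) (X i))) :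
    ∫ X : Fin N → EuclideanSpace ℝ (Fin n), F X * ∏ i, g i ‖X i‖ ≤
      ∫ X : Fin N → EuclideanSpace ℝ (Fin n),
        F X * ∏ i, Set.indicator (Metric.closedBall (0 : EuclideanSpace ℝ (Fin n)) rn)
          (fun _ => (1 : ℝ)) (X i) := by
  lift rn to NNReal using hrn.le
  refine coordinatewise_decreasing_maximized_general (fun _ => volume) F
    (fun X s hs => ?_) g hg (fun _ => rn) (fun _ => hrn) (fun i => ?_) hint1 hint2
  · simpa [NNReal.smul_def] using hFmono X (fun i => s i) 1 (fun i => (s i).2) hs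
  · rw [hgint, measureReal_def, hDn, ENNReal.toReal_one]
end
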